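/- Let σ > 0. There exists R₀ = R₀(m,n,σ) ≥ 1 such that for every R ≥ R₀ the following holds, with δ = R^{-m(m+n)²}, δ* = R^{-n(m+n)²}, τ = m/(m+n). Let i ∈ ℕ and let B ⊆ ℒ^{mn} be a ball of radius less than R^{-(m+n)(τ+i)} with ‖A‖_∞ ≤ σ for all A ∈ B. Suppose there is no q ∈ 𝔽[X]^{m+n} and no A ∈ B satisfying both 0 < max_{1≤l≤m} ‖q_l‖ < δ R^{n(τ+i)} and max_{1≤l'≤n} ‖q·C_{l'}(Ā)‖ < δ R^{-m(τ+i)-n}. Then the set of q ∈ 𝔽[X]^{m+n} such that for some A ∈ B both 0 < max_{1≤l'≤n} ‖q_{l'}‖ < δ* R^{m(1+i)} and max_{1≤l≤m} ‖q·C_l(Ā^*)‖ < δ* R^{-n(1+i)-m} hold contains at most m linearly independent points. -/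

import Mathlib

/-!
Common setup: the field `ℒ = 𝔽((X⁻¹))` of formal Laurent series with coefficients
in a finite field `𝔽` of `k` elements.  We realize `ℒ` as `LaurentSeries 𝔽`
(Hahn series over `ℤ`) in the variable `T = X⁻¹`, so that `X` corresponds to `T⁻¹`
and the polynomial ring `𝔽[X]` corresponds to series supported on nonpositive
exponents.  The absolute value of `x = Σ_{i ≤ N} a_i X^i` (with `a_N ≠ 0`) is
`k^N`, i.e. `k^(-order x)` in terms of the `T`-adic order.
-/

open scoped Classical ENNReal NNReal
open MeasureTheory

noncomputable section

namespace FSBad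

/-- The field `ℒ = 𝔽((X⁻¹))`. -/
abbrev L (𝔽 : Type) [Field 𝔽] : Type := LaurentSeries 𝔽

variable {𝔽 : Type} [Field 𝔽] [Fintype 𝔽]

/-- The absolute value `‖·‖` on `ℒ`: `‖x‖ = k^(deg_X x)`, `‖0‖ = 0`. -/
def lnorm (x : L 𝔽) : ℝ := if x = 0 then 0 else (Fintype.card 𝔽 : ℝ) ^ (-x.order)

/-- Membership in the polynomial ring `𝔽[X] ⊆ ℒ` (polynomials in `X = T⁻¹`). -/
def IsPoly (x : L 𝔽) : Prop := ∀ i : ℤ, 0 < i → x.coeff i = 0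

/-- The height (sup-norm) `‖·‖_∞` on `ℒ^ι`. -/
def vnorm {ι : Type*} (x : ι → L 𝔽) : ℝ := ⨆ i, lnorm (x i)

/-- The closed ball in `ℒ^ι` with centre `c` and radius `ρ`. -/
def vball {ι : Type*} (c : ι → L 𝔽) (ρ : ℝ) : Set (ι → L 𝔽) :=
  {x | vnorm (fun i => x i - c i) ≤ ρ}

/-- `m × n` matrices over `ℒ`, identified with `ℒ^(mn)`. -/
abbrev Mat (𝔽 : Type) [Field 𝔽] (m n : ℕ) : Type := Matrix (Fin m) (Fin n) (L 𝔽)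

/-- The height of a matrix, i.e. the sup-norm on `ℒ^(mn)`. -/
def mnorm {m n : ℕ} (A : Mat 𝔽 m n) : ℝ := ⨆ p : Fin m × Fin n, lnorm (A p.1 p.2)

/-- The closed ball in `ℒ^(mn)` with centre `c` and radius `ρ`. -/
def mball {m n : ℕ} (c : Mat 𝔽 m n) (ρ : ℝ) : Set (Mat 𝔽 m n) :=
  {A | mnorm (A - c) ≤ ρ}

/-- The distance `⟨x⟩` from `x ∈ ℒ^h` to the polynomial lattice `𝔽[X]^h`. -/
def latDist {h : ℕ} (x : Fin h → L 𝔽) : ℝ :=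
  sInf {r : ℝ | ∃ p : Fin h → L 𝔽, (∀ i, IsPoly (p i)) ∧ r = vnorm (fun i => x i - p i)}

/-- The set `𝔅(m,n)` of badly approximable systems of `m` linear forms in `n`
variables over `ℒ`. -/
def Bad (𝔽 : Type) [Field 𝔽] [Fintype 𝔽] (m n : ℕ) : Set (Mat 𝔽 m n) :=
  {A | ∃ K : ℝ, 0 < K ∧ ∀ q : Fin m → L 𝔽, (∀ i, IsPoly (q i)) → q ≠ 0 →
    latDist (Matrix.vecMul q A) ^ n > K / vnorm q ^ m}

/-- The Hausdorff `s`-measure of `E ⊆ ℒ^(mn)`, defined through countable covers by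
balls of radii `< δ`, letting `δ → 0` (the infimum over `δ`-covers is nonincreasing
in `δ`, so the limit is the supremum over `δ > 0`). -/
def hMeasure {m n : ℕ} (s : ℝ) (E : Set (Mat 𝔽 m n)) : ℝ≥0∞ :=
  ⨆ (δ : ℝ) (_ : 0 < δ),
    ⨅ (c : ℕ → Mat 𝔽 m n) (ρ : ℕ → ℝ) (_ : ∀ i, 0 < ρ i ∧ ρ i < δ)
      (_ : E ⊆ ⋃ i, mball (c i) (ρ i)), ∑' i, ENNReal.ofReal (ρ i ^ s)

/-- The Hausdorff dimension of `E ⊆ ℒ^(mn)`. -/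
def hdim {m n : ℕ} (E : Set (Mat 𝔽 m n)) : ℝ :=
  sInf {s : ℝ | 0 ≤ s ∧ hMeasure s E = 0}

/-! ### Schmidt `(α,β)`-games on `ℒ^(mn)` -/

/-- A formal ball: an element of `Ω = ℒ^(mn) × ℝ`. -/
structure FBall (𝔽 : Type) [Field 𝔽] (m n : ℕ) where
  /-- centre -/
  c : Mat 𝔽 m n
  /-- radius -/
  r : ℝ

/-- Formal inclusion of formal balls: `(c₁,ρ₁) ⊆ (c₂,ρ₂)` iff `ρ₁ + ‖c₁ - c₂‖_∞ ≤ ρ₂`. -/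
def FBall.ssub {m n : ℕ} (B₁ B₂ : FBall 𝔽 m n) : Prop :=
  B₁.r + mnorm (B₁.c - B₂.c) ≤ B₂.r

/-- The subset of `ℒ^(mn)` determined by a formal ball. -/
def FBall.toSet {m n : ℕ} (B : FBall 𝔽 m n) : Set (Mat 𝔽 m n) := mball B.c B.r

/-- A strategy for White: given the balls `B₁, …, B_{i+1}` chosen by Black so far,
produce White's next ball. -/
abbrev Strategy (𝔽 : Type) [Field 𝔽] (m n : ℕ) : Type :=
  (i : ℕ) → (Fin (i + 1) → FBall 𝔽 m n) → FBall 𝔽 m n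

/-- White's move at stage `i` when following strategy `str` against Black's balls `B`. -/
def wMove {m n : ℕ} (str : Strategy 𝔽 m n) (B : ℕ → FBall 𝔽 m n) (i : ℕ) : FBall 𝔽 m n :=
  str i fun j => B j.1

/-- Black's move `B_{j+2}` is legal (for parameter `β`): it is a formal subset of
White's ball `W_{j+1}` and has radius `β · ρ(W_{j+1})`. -/
def BlackOk {m n : ℕ} (β : ℝ) (str : Strategy 𝔽 m n) (B : ℕ → FBall 𝔽 m n) (j : ℕ) : Prop :=
  (B (j + 1)).ssub (wMove str B j) ∧ (B (j + 1)).r = β * (wMove str B j).r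

/-- White's move `W_{i+1}` is legal (for parameter `α`): it is a formal subset of
Black's ball `B_{i+1}` and has radius `α · ρ(B_{i+1})`. -/
def WhiteOk {m n : ℕ} (α : ℝ) (str : Strategy 𝔽 m n) (B : ℕ → FBall 𝔽 m n) (i : ℕ) : Prop :=
  (wMove str B i).ssub (B i) ∧ (wMove str B i).r = α * (B i).r

/-- `str` is a winning strategy for White in the `(α,β;S)`-game: against any
sequence of Black balls, White's moves are legal as long as Black has played
legally so far, and if the whole play is legal then the intersection of the
chosen balls is contained in `S`. -/
def WinningStrategy {m n : ℕ} (α β : ℝ) (S : Set (Mat 𝔽 m n)) (str : Strategy 𝔽 m n) : Prop :=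
  ∀ B : ℕ → FBall 𝔽 m n, 0 ≤ (B 0).r →
    (∀ i, (∀ j < i, BlackOk β str B j) → WhiteOk α str B i) ∧
    ((∀ j, BlackOk β str B j) → (⋂ i, (B i).toSet) ⊆ S)

/-- `S` is `(α,β)`-winning. -/
def IsWinningAB {m n : ℕ} (α β : ℝ) (S : Set (Mat 𝔽 m n)) : Prop :=
  ∃ str : Strategy 𝔽 m n, WinningStrategy α β S str

/-- `S` is `α`-winning. -/
def IsWinningA {m n : ℕ} (α : ℝ) (S : Set (Mat 𝔽 m n)) : Prop :=
  ∀ β : ℝ, 0 < β → β < 1 → IsWinningAB α β S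

/-- The winning dimension of `S` (a supremum of a set of reals, which is `0` by
convention when the set is empty). -/
def windim {m n : ℕ} (S : Set (Mat 𝔽 m n)) : ℝ :=
  sSup {α : ℝ | 0 < α ∧ α < 1 ∧ IsWinningA α S}

/-! ### The matrices `Ā`, `Ā^*` and the quantities `M_v`, `D_v`, `∇D_v` -/

/-- `Ā = [[A, I_m], [I_n, 0]]`. Rows are indexed by `Fin m ⊕ Fin n`
(coordinates `q_1, …, q_{m+n}`), columns by `Fin n ⊕ Fin m`. -/
def Abar {m n : ℕ} (A : Mat 𝔽 m n) : Matrix (Fin m ⊕ Fin n) (Fin n ⊕ Fin m) (L 𝔽) :=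
  Matrix.fromBlocks A 1 1 0

/-- `Ā^* = [[Aᵀ, I_n], [I_m, 0]]`. Rows are indexed by `Fin n ⊕ Fin m`,
columns by `Fin m ⊕ Fin n`. -/
def AbarStar {m n : ℕ} (A : Mat 𝔽 m n) : Matrix (Fin n ⊕ Fin m) (Fin m ⊕ Fin n) (L 𝔽) :=
  Matrix.fromBlocks A.transpose 1 1 0

/-- The standard bilinear form `x·y = Σ_i x_i y_i` on `ℒ^ι`. -/
def dotL {ι : Type*} [Fintype ι] (x y : ι → L 𝔽) : L 𝔽 := ∑ i, x i * y i

/-- Strictly increasing `v`-tuples `1 ≤ i_1 < ⋯ < i_v ≤ m`. -/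
def IncTuple (v m : ℕ) : Type := {f : Fin v → Fin m // StrictMono f}

/-- The vector `M_v(A) ∈ ℒ^(C(m,v)²)` of the determinants
`det (y_{i_r} · C_{j_s}(Ā^*))_{1 ≤ r,s ≤ v}` over all strictly increasing index
tuples.  (For `v = 0` every coordinate is an empty determinant, i.e. `1`.) -/
def MvVec {m n : ℕ} (y : Fin m → (Fin n ⊕ Fin m → L 𝔽)) (v : ℕ) (A : Mat 𝔽 m n) :
    IncTuple v m × IncTuple v m → L 𝔽 := fun p =>
  Matrix.det (Matrix.of fun r s : Fin v =>
    dotL (y (p.1.1 r)) fun t => AbarStar A t (Sum.inl (p.2.1 s)))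

/-- `‖M_v(A)‖_∞`. -/
def MvNorm {m n : ℕ} (y : Fin m → (Fin n ⊕ Fin m → L 𝔽)) (v : ℕ) (A : Mat 𝔽 m n) : ℝ :=
  vnorm (MvVec y v A)

/-- `M_v(K) = max_{A ∈ K} ‖M_v(A)‖_∞` for `K ⊆ ℒ^(mn)`. -/
def MvSet {m n : ℕ} (y : Fin m → (Fin n ⊕ Fin m → L 𝔽)) (v : ℕ) (K : Set (Mat 𝔽 m n)) : ℝ :=
  sSup {r : ℝ | ∃ A ∈ K, r = MvNorm y v A}

/-- `D_v(A) = det (y_h · C_l(Ā^*))_{1 ≤ h,l ≤ v}`. -/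
def Dv {m n : ℕ} (y : Fin m → (Fin n ⊕ Fin m → L 𝔽)) (v : ℕ) (hv : v ≤ m)
    (A : Mat 𝔽 m n) : L 𝔽 :=
  Matrix.det (Matrix.of fun h l : Fin v =>
    dotL (y (Fin.castLE hv h)) fun t => AbarStar A t (Sum.inl (Fin.castLE hv l)))

/-- The discrete gradient `∇D_v(A) ∈ ℒ^(mn)`, with coordinates
`D_v(A + E_{ij}) - D_v(A)`. -/
def gradDv {m n : ℕ} (y : Fin m → (Fin n ⊕ Fin m → L 𝔽)) (v : ℕ) (hv : v ≤ m)
    (A : Mat 𝔽 m n) : Fin m × Fin n → L 𝔽 := fun p =>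
  Dv y v hv (A + Matrix.single p.1 p.2 1) - Dv y v hv A

/-- `y_1, …, y_m ∈ ℒ^(m+n)` form an orthonormal system: `y_h · y_{h'} = δ_{h h'}`
and `‖t_1 y_1 + ⋯ + t_m y_m‖_∞ = max_h ‖t_h‖`. -/
def OrthoSystem {m n : ℕ} (y : Fin m → (Fin n ⊕ Fin m → L 𝔽)) : Prop :=
  (∀ h h', dotL (y h) (y h') = if h = h' then 1 else 0) ∧
  (∀ t : Fin m → L 𝔽, vnorm (fun r => ∑ h, t h * y h r) = ⨆ h, lnorm (t h))

/-! ### Distance functions, parallelepipeds and successive minima -/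

/-- The `j`-th successive minimum of a distance function `F` on `ℒ^N`: the infimum
of all `λ > 0` such that `{F < λ}` contains `j` linearly independent points of
`𝔽[X]^N`. -/
def succMin {N : ℕ} (F : (Fin N → L 𝔽) → ℝ) (j : ℕ) : ℝ :=
  sInf {lam : ℝ | 0 < lam ∧ ∃ v : Fin j → (Fin N → L 𝔽),
    (∀ r, ∀ i, IsPoly (v r i)) ∧ LinearIndependent (L 𝔽) v ∧ ∀ r, F (v r) < lam}

/-- The distance function `F_A(x) = max_j c_j⁻¹ ‖Σ_i x_i a_{ij}‖`. -/
def FA {N : ℕ} (A : Matrix (Fin N) (Fin N) (L 𝔽)) (c : Fin N → ℝ)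
    (x : Fin N → L 𝔽) : ℝ :=
  ⨆ j, (c j)⁻¹ * lnorm (∑ i, x i * A i j)

/-- The parallelepiped `P_A(λ) = {x ∈ ℒ^N : F_A(x) < λ}`. -/
def PA {N : ℕ} (A : Matrix (Fin N) (Fin N) (L 𝔽)) (c : Fin N → ℝ) (lam : ℝ) :
    Set (Fin N → L 𝔽) := {x | FA A c x < lam}

/-- The polar distance function `F_A^*(y) = sup_{x ≠ 0} ‖x·y‖ / F_A(x)`. -/
def FAstar {N : ℕ} (A : Matrix (Fin N) (Fin N) (L 𝔽)) (c : Fin N → ℝ)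
    (y : Fin N → L 𝔽) : ℝ :=
  ⨆ x : {x : Fin N → L 𝔽 // x ≠ 0}, lnorm (dotL x.1 y) / FA A c x.1

/-! ### Haar measure, characterized by translation invariance and normalization -/

/-- The Borel σ-algebra on `ℒ^N`, generated by the balls. -/
def vecSigma (𝔽 : Type) [Field 𝔽] [Fintype 𝔽] (N : ℕ) : MeasurableSpace (Fin N → L 𝔽) :=
  MeasurableSpace.generateFrom {s | ∃ c ρ, (0 : ℝ) < ρ ∧ s = vball c ρ}

/-- `μ` is the Haar measure on `ℒ^N`: translation invariant and normalized so that
the unit ball `I^N` has measure `1` (these properties determine it uniquely). -/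
def IsHaarVec {N : ℕ} (μ : @Measure (Fin N → L 𝔽) (vecSigma 𝔽 N)) : Prop :=
  (∀ (v : Fin N → L 𝔽) (s : Set (Fin N → L 𝔽)), μ ((fun x => x + v) ⁻¹' s) = μ s) ∧
  μ {x | ∀ i, lnorm (x i) < 1} = 1

/-- The Borel σ-algebra on `ℒ^(mn)`, generated by the balls. -/
def matSigma (𝔽 : Type) [Field 𝔽] [Fintype 𝔽] (m n : ℕ) : MeasurableSpace (Mat 𝔽 m n) :=
  MeasurableSpace.generateFrom {s | ∃ c ρ, (0 : ℝ) < ρ ∧ s = mball c ρ}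

/-- `μ` is the Haar measure on `ℒ^(mn)`: translation invariant and normalized so
that the unit ball `I^(mn)` has measure `1`. -/
def IsHaarMat {m n : ℕ} (μ : @Measure (Mat 𝔽 m n) (matSigma 𝔽 m n)) : Prop :=
  (∀ (v : Mat 𝔽 m n) (s : Set (Mat 𝔽 m n)), μ ((fun x => x + v) ⁻¹' s) = μ s) ∧
  μ {A | ∀ i j, lnorm (A i j) < 1} = 1

/-! ### The constants of Section 3 -/

/-- `τ = m/(m+n)`. -/
def tau (m n : ℕ) : ℝ := m / (m + n)

/-- `δ = R^(-m(m+n)²)`. -/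
def del (R : ℝ) (m n : ℕ) : ℝ := R ^ (-((m : ℝ) * ((m : ℝ) + n) ^ 2))

/-- `δ* = R^(-n(m+n)²)`. -/
def delStar (R : ℝ) (m n : ℕ) : ℝ := R ^ (-((n : ℝ) * ((m : ℝ) + n) ^ 2))

set_option linter.unusedSectionVars false
lemma card_gt_one : (1 : ℝ) < (Fintype.card 𝔽 : ℝ) := by
  exact_mod_cast Fintype.one_lt_card (α := 𝔽)

lemma lnorm_zero : lnorm (0 : L 𝔽) = 0 := by simp [lnorm]

lemma lnorm_of_ne {x : L 𝔽} (h : x ≠ 0) :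
    lnorm x = (Fintype.card 𝔽 : ℝ) ^ (-x.order) := by simp [lnorm, h]

lemma lnorm_pos {x : L 𝔽} (h : x ≠ 0) : 0 < lnorm x := by
  rw [lnorm_of_ne h]
  have := card_gt_one (𝔽 := 𝔽)
  positivity

lemma lnorm_nonneg (x : L 𝔽) : 0 ≤ lnorm x := by
  by_cases h : x = 0
  · simp [h, lnorm_zero]
  · exact (lnorm_pos h).le

lemma lnorm_mul (x y : L 𝔽) : lnorm (x * y) = lnorm x * lnorm y := by
  by_cases hx : x = 0
  · simp [hx, lnorm_zero]
  by_cases hy : y = 0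
  · simp [hy, lnorm_zero]
  rw [lnorm_of_ne hx, lnorm_of_ne hy, lnorm_of_ne (mul_ne_zero hx hy),
    HahnSeries.order_mul hx hy, neg_add, zpow_add₀]
  have := card_gt_one (𝔽 := 𝔽)
  positivity

lemma lnorm_neg (x : L 𝔽) : lnorm (-x) = lnorm x := by
  simp [lnorm, HahnSeries.order_neg]

lemma lnorm_one : lnorm (1 : L 𝔽) = 1 := by
  rw [lnorm_of_ne one_ne_zero]; simp

/-- a characterization of small norm through coefficients -/
lemma lnorm_le_iff (x : L 𝔽) (j : ℤ) :
    lnorm x ≤ (Fintype.card 𝔽 : ℝ) ^ (-j) ↔ ∀ i < j, x.coeff i = 0 := by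
  have hk := card_gt_one (𝔽 := 𝔽)
  by_cases hx : x = 0
  · subst hx
    simp only [lnorm_zero, HahnSeries.coeff_zero, implies_true, iff_true]
    positivity
  rw [lnorm_of_ne hx, zpow_le_zpow_iff_right₀ hk, neg_le_neg_iff]
  constructor
  · intro h i hi
    exact HahnSeries.coeff_eq_zero_of_lt_order (lt_of_lt_of_le hi h)
  · intro h
    by_contra hlt
    push Not at hlt
    exact hx (HahnSeries.coeff_order_eq_zero.1 (h _ hlt))

lemma lnorm_add_le {x y : L 𝔽} {B : ℝ} (hx : lnorm x ≤ B) (hy : lnorm y ≤ B) :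
    lnorm (x + y) ≤ B := by
  have hk := card_gt_one (𝔽 := 𝔽)
  have hB : 0 ≤ B := (lnorm_nonneg x).trans hx
  by_cases h0 : x = 0
  · simpa [h0] using hy
  by_cases h1 : y = 0
  · simpa [h1] using hx
  by_cases h2 : x + y = 0
  · simpa [h2, lnorm_zero] using hB
  have := HahnSeries.min_order_le_order_add h2
  rw [lnorm_of_ne h2]
  rw [lnorm_of_ne h0] at hx
  rw [lnorm_of_ne h1] at hy
  rcases min_le_iff.1 this with h | h
  · exact (zpow_le_zpow_right₀ hk.le (by omega)).trans hx
  · exact (zpow_le_zpow_right₀ hk.le (by omega)).trans hy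

lemma lnorm_sub_le {x y : L 𝔽} {B : ℝ} (hx : lnorm x ≤ B) (hy : lnorm y ≤ B) :
    lnorm (x - y) ≤ B := by
  rw [sub_eq_add_neg]
  exact lnorm_add_le hx (by rwa [lnorm_neg])

lemma lnorm_sum_le {ι : Type*} (s : Finset ι) (f : ι → L 𝔽) {B : ℝ} (hB : 0 ≤ B)
    (h : ∀ i ∈ s, lnorm (f i) ≤ B) : lnorm (∑ i ∈ s, f i) ≤ B := by
  induction s using Finset.induction_on with
  | empty => simpa [lnorm_zero] using hB
  | insert a s ha ih =>
    rw [Finset.sum_insert ha]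
    exact lnorm_add_le (h a (by simp)) (ih fun i hi => h i (by simp [hi]))

lemma lnorm_prod {ι : Type*} (s : Finset ι) (f : ι → L 𝔽) :
    lnorm (∏ i ∈ s, f i) = ∏ i ∈ s, lnorm (f i) := by
  induction s using Finset.induction_on with
  | empty => simp [lnorm_one]
  | insert a s ha ih => rw [Finset.prod_insert ha, Finset.prod_insert ha, lnorm_mul, ih]

/-- the polynomial ring as a subring -/
def polyRing (𝔽 : Type) [Field 𝔽] : Subring (L 𝔽) where
  carrier := {x | IsPoly x}
  mul_mem' := by
    intro x y hx hy i hi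
    rw [HahnSeries.coeff_mul]
    refine Finset.sum_eq_zero fun ij hij => ?_
    have h := (Finset.mem_antidiagonal.1 hij).2.2
    rcases lt_or_ge 0 ij.1 with h1 | h1
    · rw [hx _ h1, zero_mul]
    · rw [hy ij.2 (by omega), mul_zero]
  one_mem' := by
    intro i hi
    rw [HahnSeries.coeff_one, if_neg (by omega)]
  add_mem' := by
    intro x y hx hy i hi
    simp [hx i hi, hy i hi]
  zero_mem' := by intro i hi; simp
  neg_mem' := by
    intro x hx i hi
    simp [hx i hi]

lemma mem_polyRing {x : L 𝔽} : x ∈ polyRing 𝔽 ↔ IsPoly x := Iff.rfl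

lemma one_le_lnorm {x : L 𝔽} (hx : IsPoly x) (h0 : x ≠ 0) : 1 ≤ lnorm x := by
  rw [lnorm_of_ne h0]
  refine one_le_zpow₀ (card_gt_one (𝔽 := 𝔽)).le ?_
  by_contra h
  exact h0 (HahnSeries.coeff_order_eq_zero.1 (hx _ (by omega)))

lemma isPoly_det {ι : Type*} [Fintype ι] [DecidableEq ι] (M : Matrix ι ι (L 𝔽))
    (h : ∀ i j, IsPoly (M i j)) : IsPoly M.det := by
  rw [← mem_polyRing, Matrix.det_apply]
  refine Subring.sum_mem _ fun σ _ => ?_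
  rw [Units.smul_def]
  exact Subring.zsmul_mem _ (Subring.prod_mem _ fun i _ => h _ _) _

lemma lnorm_det_le {ι : Type*} [Fintype ι] [DecidableEq ι] (M : Matrix ι ι (L 𝔽))
    (a b : ι → ℝ) (ha : ∀ i, 0 ≤ a i) (hb : ∀ i, 0 ≤ b i)
    (h : ∀ i j, lnorm (M i j) ≤ a i * b j) : lnorm M.det ≤ (∏ i, a i) * ∏ i, b i := by
  have hB : 0 ≤ (∏ i, a i) * ∏ i, b i :=
    mul_nonneg (Finset.prod_nonneg fun i _ => ha i) (Finset.prod_nonneg fun i _ => hb i)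
  rw [Matrix.det_apply]
  refine lnorm_sum_le _ _ hB fun σ _ => ?_
  have h1 : lnorm (∏ i, M (σ i) i) ≤ (∏ i, a i) * ∏ i, b i := by
    rw [lnorm_prod, ← Equiv.prod_comp σ a, ← Finset.prod_mul_distrib]
    exact Finset.prod_le_prod (fun i _ => lnorm_nonneg _) fun i _ => h _ _
  rcases Int.units_eq_one_or (Equiv.Perm.sign σ) with hs | hs
  · rw [hs, one_smul]; exact h1
  · rw [hs, Units.neg_smul, one_smul, lnorm_neg]; exact h1

lemma exists_polyPart (x : L 𝔽) : ∃ y : L 𝔽, IsPoly y ∧ ∀ j ≤ 0, (x - y).coeff j = 0 := by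
  refine ⟨⟨fun j => if j ≤ 0 then x.coeff j else 0, ?_⟩, ?_, ?_⟩
  · refine x.isPWO_support.mono fun j hj => ?_
    simp only [Function.mem_support, ne_eq, ite_eq_right_iff, Classical.not_imp] at hj
    exact hj.2
  · intro i hi
    exact if_neg (by omega)
  · intro j hj
    simp [hj]

/-- weighted diagonal dominance -/
lemma eq_zero_of_dominant {ι : Type*} [Fintype ι] [DecidableEq ι] (Z : ι → ι → L 𝔽)
    (d : ι → L 𝔽) (h : ∀ i j, lnorm (Z i j - if i = j then d j else 0) < lnorm (d j))
    (c : ι → L 𝔽) (hc : ∀ j, ∑ i, c i * Z i j = 0) : c = 0 := by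
  by_contra hne
  obtain ⟨i0, hi0⟩ := Function.ne_iff.1 hne
  obtain ⟨r, -, hr⟩ := Finset.exists_max_image Finset.univ (fun i => lnorm (c i)) ⟨i0, by simp⟩
  have hrpos : 0 < lnorm (c r) := (lnorm_pos hi0).trans_le (hr i0 (by simp))
  obtain ⟨r', -, hr'⟩ := Finset.exists_max_image Finset.univ
    (fun i => lnorm (Z i r - if i = r then d r else 0)) ⟨i0, by simp⟩
  have key : c r * d r = - ∑ i, c i * (Z i r - if i = r then d r else 0) := by
    simp only [mul_sub, Finset.sum_sub_distrib, hc r]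
    simp
  have h1 : lnorm (c r * d r) ≤ lnorm (c r) * lnorm (Z r' r - if r' = r then d r else 0) := by
    rw [key, lnorm_neg]
    refine lnorm_sum_le _ _ (mul_nonneg (lnorm_nonneg _) (lnorm_nonneg _)) fun i _ => ?_
    rw [lnorm_mul]
    exact mul_le_mul (hr i (by simp)) (hr' i (by simp)) (lnorm_nonneg _) (lnorm_nonneg _)
  rw [lnorm_mul] at h1
  exact absurd (le_of_mul_le_mul_left h1 hrpos) (not_le.2 (h r' r))

lemma le_iSup_fin {ι : Type*} [Finite ι] (f : ι → ℝ) (i : ι) : f i ≤ ⨆ j, f j :=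
  le_ciSup (Finite.bddAbove_range f) i

lemma iSup_lt_fin {ι : Type*} [Finite ι] [Nonempty ι] (f : ι → ℝ) {B : ℝ} (h : ∀ i, f i < B) :
    (⨆ j, f j) < B := by
  obtain ⟨i, hi⟩ := exists_eq_ciSup_of_finite (f := f)
  rw [← hi]; exact h i

/-- the polynomial with given coefficients -/
def mkP {t : ℕ} (w : Fin t → 𝔽) : L 𝔽 := ∑ j : Fin t, HahnSeries.single (-(j.1 : ℤ)) (w j)

lemma mkP_coeff {t : ℕ} (w : Fin t → 𝔽) (j : Fin t) : (mkP w).coeff (-(j.1 : ℤ)) = w j := by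
  rw [mkP, HahnSeries.coeff_sum, Finset.sum_eq_single j]
  · simp
  · intro b _ hb
    rw [HahnSeries.coeff_single_of_ne]
    intro h
    apply hb
    apply Fin.ext
    omega
  · simp

lemma mkP_coeff_zero {t : ℕ} (w : Fin t → 𝔽) (j : ℤ) (hj : 0 < j ∨ j ≤ -(t : ℤ)) :
    (mkP w).coeff j = 0 := by
  rw [mkP, HahnSeries.coeff_sum]
  refine Finset.sum_eq_zero fun i _ => ?_
  rw [HahnSeries.coeff_single_of_ne]
  have := i.2
  omega

lemma mkP_poly {t : ℕ} (w : Fin t → 𝔽) : IsPoly (mkP w) := fun j hj =>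
  mkP_coeff_zero w j (Or.inl hj)

lemma mkP_mul_coeff {t : ℕ} (w : Fin t → 𝔽) (x : L 𝔽) (g : ℤ) :
    (mkP w * x).coeff g = ∑ j : Fin t, w j * x.coeff (g + j.1) := by
  rw [mkP, Finset.sum_mul, HahnSeries.coeff_sum]
  refine Finset.sum_congr rfl fun j _ => ?_
  rw [HahnSeries.coeff_single_mul, sub_neg_eq_add]

lemma lin_alt {ι κ : Type*} [Fintype ι] [Fintype κ] [DecidableEq ι] (H : Matrix ι κ 𝔽) :
    (∃ w : ι → 𝔽, w ≠ 0 ∧ ∀ k, ∑ i, w i * H i k = 0) ∨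
      ∀ z : ι → 𝔽, ∃ p : κ → 𝔽, ∀ i, ∑ k, H i k * p k = z i := by
  by_cases hs : LinearMap.range H.mulVecLin = ⊤
  · right
    intro z
    obtain ⟨p, hp⟩ := LinearMap.range_eq_top.1 hs z
    exact ⟨p, fun i => by rw [← hp]; rfl⟩
  · left
    obtain ⟨f, hf0, hf⟩ := Submodule.exists_le_ker_of_lt_top _ (lt_top_iff_ne_top.2 hs)
    have hfv : ∀ z, f z = ∑ i, f (Pi.single i 1) * z i := by
      intro z
      conv_lhs => rw [LinearMap.pi_apply_eq_sum_univ f z]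
      refine Finset.sum_congr rfl fun i _ => ?_
      rw [smul_eq_mul, mul_comm]
      congr 2
      ext j
      simp [Pi.single_apply, eq_comm]
    refine ⟨fun i => f (Pi.single i 1), ?_, ?_⟩
    · intro h0
      apply hf0
      ext1 i
      ext
      simpa using congrFun h0 i
    · intro k
      have := hf (LinearMap.mem_range_self H.mulVecLin (Pi.single k 1))
      rw [LinearMap.mem_ker, hfv] at this
      rw [← this]
      simp

lemma dual_alt {m n : ℕ} (A : Mat 𝔽 m n) (s t : ℕ) :
    (∃ (a : Fin m → L 𝔽) (b : Fin n → L 𝔽), (∀ l, IsPoly (a l)) ∧ (∀ l, IsPoly (b l)) ∧ a ≠ 0 ∧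
      (∀ l, ∀ j : ℤ, j < -(t : ℤ) + 1 → (a l).coeff j = 0) ∧
      ∀ l', ∀ j : ℤ, j < s + 1 → (∑ l, a l * A l l' + b l').coeff j = 0) ∨
    (∀ ξ : Fin m → L 𝔽, ∃ (x : Fin n → L 𝔽) (y : Fin m → L 𝔽),
      (∀ l, IsPoly (x l)) ∧ (∀ l, IsPoly (y l)) ∧
      (∀ l, ∀ j : ℤ, j < -(s : ℤ) + 1 → (x l).coeff j = 0) ∧
      ∀ l, ∀ j : ℤ, j < t + 1 → (ξ l - (∑ l', x l' * A l l' + y l)).coeff j = 0) := by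
  rcases lin_alt (Matrix.of fun (p : Fin m × Fin t) (q : Fin n × Fin s) =>
    (A p.1 q.1).coeff ((p.2.1 : ℤ) + 1 + q.2.1)) with ⟨w, hw0, hw⟩ | h
  · left
    choose b hb hb' using fun l' => exists_polyPart (∑ l, mkP (fun j => w (l, j)) * A l l')
    refine ⟨fun l => mkP fun j => w (l, j), fun l' => - b l', fun l => mkP_poly _,
      fun l => (polyRing 𝔽).neg_mem (hb l), ?_, ?_, ?_⟩
    · intro h0
      apply hw0
      ext ⟨l, j⟩
      have : mkP (fun j => w (l, j)) = 0 := congrFun h0 l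
      rw [← mkP_coeff (fun j => w (l, j)) j]
      rw [this]; simp
    · intro l j hj
      exact mkP_coeff_zero _ _ (Or.inr (by omega))
    · intro l' j hj
      rw [← sub_eq_add_neg]
      rcases le_or_gt j 0 with h | h
      · exact hb' l' j h
      · rw [HahnSeries.coeff_sub, hb l' j h, sub_zero, HahnSeries.coeff_sum]
        obtain ⟨j', hj'⟩ : ∃ j' : Fin s, j = j'.1 + 1 := ⟨⟨(j - 1).toNat, by omega⟩, by
          simp only; omega⟩
        have := hw (l', j')
        rw [Fintype.sum_prod_type] at this
        rw [← this]
        refine Finset.sum_congr rfl fun l _ => ?_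
        rw [mkP_mul_coeff]
        refine Finset.sum_congr rfl fun i _ => ?_
        simp only [Matrix.of_apply]
        rw [hj']
        congr 2
        ring
  · right
    intro ξ
    obtain ⟨p, hp⟩ := h fun i => (ξ i.1).coeff ((i.2.1 : ℤ) + 1)
    choose y hy hy' using fun l => exists_polyPart
      (ξ l - ∑ l', mkP (fun j => p (l', j)) * A l l')
    refine ⟨fun l' => mkP fun j => p (l', j), y, fun l => mkP_poly _, hy, ?_, ?_⟩
    · intro l j hj
      exact mkP_coeff_zero _ _ (Or.inr (by omega))
    · intro l j hj
      rw [← sub_sub]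
      rcases le_or_gt j 0 with h | h
      · exact hy' l j h
      · rw [HahnSeries.coeff_sub, hy l j h, sub_zero, HahnSeries.coeff_sub, sub_eq_zero,
          HahnSeries.coeff_sum]
        obtain ⟨j', hj'⟩ : ∃ j' : Fin t, j = j'.1 + 1 := ⟨⟨(j - 1).toNat, by omega⟩, by
          simp only; omega⟩
        have := hp (l, j')
        rw [Fintype.sum_prod_type] at this
        simp only [Matrix.of_apply] at this
        rw [hj', ← this]
        refine Finset.sum_congr rfl fun l' _ => ?_
        rw [mkP_mul_coeff]
        refine Finset.sum_congr rfl fun i _ => ?_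
        rw [mul_comm]

/-- the transformed coordinates `(x, A x + y)` -/
def tr {m n : ℕ} (A : Mat 𝔽 m n) (z : Fin n ⊕ Fin m → L 𝔽) : Fin n ⊕ Fin m → L 𝔽 :=
  Sum.elim (fun l' => z (Sum.inl l'))
    (fun l => ∑ l', z (Sum.inl l') * A l l' + z (Sum.inr l))

lemma tr_eq {m n : ℕ} (A : Mat 𝔽 m n) (z : Fin n ⊕ Fin m → L 𝔽) :
    tr A z = Matrix.vecMul z (Matrix.fromBlocks 1 A.transpose 0 1) := by
  ext1 c
  rcases c with l | l
  · simp [tr, Matrix.vecMul, dotProduct, Matrix.one_apply]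
  · simp [tr, Matrix.vecMul, dotProduct, Matrix.one_apply]

lemma lnorm_single (j : ℤ) : lnorm (HahnSeries.single j (1 : 𝔽) : L 𝔽) =
    (Fintype.card 𝔽 : ℝ) ^ (-j) := by
  rw [lnorm_of_ne (by simp), HahnSeries.order_single one_ne_zero]

lemma exists_indep {m n : ℕ} (A : Mat 𝔽 m n) (s t : ℕ)
    (h : ∀ ξ : Fin m → L 𝔽, ∃ (x : Fin n → L 𝔽) (y : Fin m → L 𝔽),
      (∀ l, IsPoly (x l)) ∧ (∀ l, IsPoly (y l)) ∧
      (∀ l, ∀ j : ℤ, j < -(s : ℤ) + 1 → (x l).coeff j = 0) ∧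
      ∀ l, ∀ j : ℤ, j < t + 1 → (ξ l - (∑ l', x l' * A l l' + y l)).coeff j = 0) :
    ∃ u : Fin n ⊕ Fin m → (Fin n ⊕ Fin m → L 𝔽), (∀ r c, IsPoly (u r c)) ∧
      LinearIndependent (L 𝔽) u ∧
      (∀ r l, lnorm (tr A (u r) (Sum.inl l)) ≤ (Fintype.card 𝔽 : ℝ) ^ s) ∧
      (∀ r l, lnorm (tr A (u r) (Sum.inr l)) ≤ (Fintype.card 𝔽 : ℝ) ^ (-(t : ℤ))) := by
  have hk := card_gt_one (𝔽 := 𝔽)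
  let d : Fin n ⊕ Fin m → L 𝔽 := Sum.elim (fun _ => HahnSeries.single (-(s : ℤ)) 1)
    (fun _ => HahnSeries.single (t : ℤ) 1)
  have hd1 : ∀ l, lnorm (d (Sum.inl l)) = (Fintype.card 𝔽 : ℝ) ^ s := fun l => by
    simp only [d, Sum.elim_inl, lnorm_single, neg_neg, zpow_natCast]
  have hd2 : ∀ l, lnorm (d (Sum.inr l)) = (Fintype.card 𝔽 : ℝ) ^ (-(t : ℤ)) := fun l => by
    simp only [d, Sum.elim_inr, lnorm_single]
  have hlt1 : ∀ l (z : L 𝔽), (∀ j : ℤ, j < -(s : ℤ) + 1 → z.coeff j = 0) →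
      lnorm z < lnorm (d (Sum.inl l)) := by
    intro l z hz
    rw [hd1, ← zpow_natCast]
    refine ((lnorm_le_iff _ _).2 hz).trans_lt (zpow_lt_zpow_right₀ hk (by omega))
  have hlt2 : ∀ l (z : L 𝔽), (∀ j : ℤ, j < (t : ℤ) + 1 → z.coeff j = 0) →
      lnorm z < lnorm (d (Sum.inr l)) := by
    intro l z hz
    rw [hd2]
    refine ((lnorm_le_iff _ _).2 hz).trans_lt (zpow_lt_zpow_right₀ hk (by omega))
  have main : ∀ r : Fin n ⊕ Fin m, ∃ z : Fin n ⊕ Fin m → L 𝔽, (∀ c, IsPoly (z c)) ∧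
      ∀ c, lnorm (tr A z c - if r = c then d c else 0) < lnorm (d c) := by
    rintro (l0 | l0)
    · obtain ⟨x, y, hx, hy, hxs, hxy⟩ := h fun l => -(HahnSeries.single (-(s : ℤ)) 1 * A l l0)
      have hsp : IsPoly (HahnSeries.single (-(s : ℤ)) (1 : 𝔽) : L 𝔽) := by
        intro i hi
        rw [HahnSeries.coeff_single_of_ne (by omega)]
      refine ⟨Sum.elim (fun l => x l + if l = l0 then HahnSeries.single (-(s : ℤ)) 1 else 0) y,
        ?_, ?_⟩
      · rintro (l | l)
        · refine (polyRing 𝔽).add_mem (hx l) ?_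
          split_ifs
          · exact hsp
          · exact (polyRing 𝔽).zero_mem
        · exact hy l
      · rintro (l | l)
        · have : tr A (Sum.elim (fun l => x l + if l = l0 then HahnSeries.single (-(s : ℤ)) 1
              else 0) y) (Sum.inl l) - (if Sum.inl l0 = (Sum.inl l : Fin n ⊕ Fin m) then
                d (Sum.inl l) else 0) = x l := by
            by_cases hl : l = l0 <;> simp [tr, d, hl, eq_comm]
          rw [this]
          exact hlt1 l _ (hxs l)
        · have : tr A (Sum.elim (fun l => x l + if l = l0 then HahnSeries.single (-(s : ℤ)) 1
              else 0) y) (Sum.inr l) - (if Sum.inl l0 = (Sum.inr l : Fin n ⊕ Fin m) then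
                d (Sum.inr l) else 0) =
              -(-(HahnSeries.single (-(s : ℤ)) 1 * A l l0) - (∑ l', x l' * A l l' + y l)) := by
            simp [tr, add_mul, Finset.sum_add_distrib]
            ring
          rw [this, lnorm_neg]
          exact hlt2 l _ (hxy l)
    · obtain ⟨x, y, hx, hy, hxs, hxy⟩ := h fun l => if l = l0 then HahnSeries.single (t : ℤ) 1
        else 0
      refine ⟨Sum.elim x y, ?_, ?_⟩
      · rintro (l | l)
        · exact hx l
        · exact hy l
      · rintro (l | l)
        · have : tr A (Sum.elim x y) (Sum.inl l) -
              (if Sum.inr l0 = (Sum.inl l : Fin n ⊕ Fin m) then d (Sum.inl l) else 0) = x l := by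
            simp [tr]
          rw [this]
          exact hlt1 l _ (hxs l)
        · have : tr A (Sum.elim x y) (Sum.inr l) -
              (if Sum.inr l0 = (Sum.inr l : Fin n ⊕ Fin m) then d (Sum.inr l) else 0) =
              -((if l = l0 then HahnSeries.single (t : ℤ) 1 else 0)
                - (∑ l', x l' * A l l' + y l)) := by
            by_cases hl : l = l0
            · simp [tr, d, hl]
            · have hl' : ¬ l0 = l := fun h => hl h.symm
              simp [tr, hl, hl']
          rw [this, lnorm_neg]
          exact hlt2 l _ (hxy l)
  choose u hu hud using main
  have hb : ∀ r c, lnorm (tr A (u r) c) ≤ lnorm (d c) := by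
    intro r c
    have e : tr A (u r) c = (tr A (u r) c - if r = c then d c else 0) +
      (if r = c then d c else 0) := by ring
    rw [e]
    refine lnorm_add_le (hud r c).le ?_
    split_ifs
    · exact le_rfl
    · rw [lnorm_zero]; exact lnorm_nonneg _
  refine ⟨u, hu, ?_, fun r l => ?_, fun r l => ?_⟩
  · rw [Fintype.linearIndependent_iff]
    intro g hg
    have hz : ∀ c, ∑ r, g r * tr A (u r) c = 0 := by
      intro c
      have h2 : tr A (∑ r, g r • u r) = ∑ r, g r • tr A (u r) := by
        simp only [tr_eq, Matrix.sum_vecMul, Matrix.smul_vecMul]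
      rw [hg] at h2
      have h3 := congrFun h2 c
      rw [tr_eq, Matrix.zero_vecMul, Finset.sum_apply] at h3
      simpa using h3.symm
    exact fun i => congrFun (eq_zero_of_dominant (fun r => tr A (u r)) d hud g hz) i
  · rw [← hd1 l]; exact hb r _
  · rw [← hd2 l]; exact hb r _

lemma det_bound {m n : ℕ} (A : Mat 𝔽 m n) (X Y M : ℝ) (hX : 0 ≤ X) (hY : 0 ≤ Y) (hM : 0 ≤ M)
    (v : Fin (m + 1) → (Fin n ⊕ Fin m → L 𝔽)) (hv : LinearIndependent (L 𝔽) v)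
    (hvp : ∀ r c, IsPoly (v r c))
    (hvX : ∀ r l, lnorm (tr A (v r) (Sum.inl l)) ≤ X)
    (hvY : ∀ r l, lnorm (tr A (v r) (Sum.inr l)) ≤ Y)
    (u : Fin n ⊕ Fin m → (Fin n ⊕ Fin m → L 𝔽)) (hu : LinearIndependent (L 𝔽) u)
    (hup : ∀ r c, IsPoly (u r c))
    (huX : ∀ r l, lnorm (tr A (u r) (Sum.inl l)) ≤ M * X)
    (huY : ∀ r l, lnorm (tr A (u r) (Sum.inr l)) ≤ M * Y) :
    1 ≤ M ^ (n - 1) * (X ^ n * Y ^ m) := by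
  let w : Fin (m + 1) ⊕ (Fin n ⊕ Fin m) → (Fin n ⊕ Fin m → L 𝔽) := Sum.elim v u
  have hs : LinearIndepOn (L 𝔽) w (Set.range Sum.inl) := by
    have e : LinearIndependent (L 𝔽) (w ∘ Sum.inl) := hv
    exact (linearIndepOn_range_iff Sum.inl_injective w).2 e
  obtain ⟨b, -, hsb, hspan, hb⟩ := exists_linearIndepOn_extension hs (Set.subset_univ _)
  have htop : ⊤ ≤ Submodule.span (L 𝔽) (Set.range fun x : b => w x) := by
    have h1 : Submodule.span (L 𝔽) (Set.range u) = ⊤ :=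
      hu.span_eq_top_of_card_eq_finrank' (by simp)
    rw [← h1, Submodule.span_le]
    rintro _ ⟨r, rfl⟩
    have := hspan ⟨Sum.inr r, trivial, rfl⟩
    rwa [Set.image_eq_range] at this
  have hcard : Fintype.card b = n + m := by
    have := Module.finrank_eq_card_basis (Module.Basis.mk hb htop)
    simpa using this.symm
  let e : Fin n ⊕ Fin m ≃ b := Fintype.equivOfCardEq (by simp [hcard])
  let Z : Matrix (Fin n ⊕ Fin m) (Fin n ⊕ Fin m) (L 𝔽) := Matrix.of fun r => w (e r)
  have hZ : Z.det ≠ 0 := by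
    have h1 : LinearIndependent (L 𝔽) Z.row := hb.comp e e.injective
    rw [Matrix.linearIndependent_rows_iff_isUnit, Matrix.isUnit_iff_isUnit_det] at h1
    exact h1.ne_zero
  have hZp : IsPoly Z.det := by
    refine isPoly_det _ fun r c => ?_
    have : ∀ x, IsPoly (w x c) := by
      rintro (x | x)
      · exact hvp x c
      · exact hup x c
    exact this _
  have hdet : (Z * Matrix.fromBlocks 1 A.transpose 0 1).det = Z.det := by
    rw [Matrix.det_mul, Matrix.det_fromBlocks_zero₂₁]; simp
  let μ : Fin (m + 1) ⊕ (Fin n ⊕ Fin m) → ℝ := Sum.elim (fun _ => 1) (fun _ => M)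
  let W : Fin n ⊕ Fin m → ℝ := Sum.elim (fun _ => X) (fun _ => Y)
  have hμ : ∀ x, 0 ≤ μ x := by
    rintro (x | x)
    · exact zero_le_one
    · exact hM
  have hW : ∀ x, 0 ≤ W x := by
    rintro (x | x)
    · exact hX
    · exact hY
  have hbd : ∀ x c, lnorm (tr A (w x) c) ≤ μ x * W c := by
    rintro (x | x) (c | c)
    · simpa [μ, W, w] using hvX x c
    · simpa [μ, W, w] using hvY x c
    · simpa [μ, W, w] using huX x c
    · simpa [μ, W, w] using huY x c
  have hle := lnorm_det_le (Z * Matrix.fromBlocks 1 A.transpose 0 1) (fun r => μ (e r)) W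
    (fun r => hμ _) hW (by
      intro r c
      have := hbd (e r) c
      rw [tr_eq] at this
      exact this)
  rw [hdet] at hle
  have hWp : ∏ c, W c = X ^ n * Y ^ m := by simp [W, Fintype.prod_sum_type]
  have hμp : ∏ r, μ (e r) = M ^ (n - 1) := by
    rw [Equiv.prod_comp e (fun x => μ x)]
    have h1 : ∏ x : b, μ x = ∏ x ∈ b.toFinset, μ x := Finset.prod_set_coe b
    have hsub : Finset.univ.map ⟨Sum.inl, Sum.inl_injective⟩ ⊆ b.toFinset := by
      intro x hx
      rw [Finset.mem_map] at hx
      obtain ⟨y, -, rfl⟩ := hx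
      rw [Set.mem_toFinset]
      exact hsb ⟨y, rfl⟩
    rw [h1, ← Finset.prod_sdiff hsub, Finset.prod_map]
    have h2 : ∏ x ∈ b.toFinset \ Finset.univ.map ⟨Sum.inl, Sum.inl_injective⟩, μ x =
        ∏ x ∈ b.toFinset \ Finset.univ.map
          (⟨Sum.inl, Sum.inl_injective⟩ : Fin (m + 1) ↪ Fin (m + 1) ⊕ (Fin n ⊕ Fin m)), M := by
      refine Finset.prod_congr rfl fun x hx => ?_
      rcases x with x | x
      · simp at hx
      · rfl
    rw [h2, Finset.prod_const, Finset.card_sdiff_of_subset hsub, Finset.card_map,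
      Set.toFinset_card, hcard]
    simp only [μ, Function.Embedding.coeFn_mk, Sum.elim_inl, Finset.prod_const_one, mul_one,
      Finset.card_univ, Fintype.card_fin]
    congr 1
    omega
  rw [hWp, hμp] at hle
  exact (one_le_lnorm hZp hZ).trans hle

lemma aux_cube (n N : ℝ) (h : n ≤ N) (h2 : 2 ≤ N) : n * N ≤ N ^ 3 := by
  have h3 : n * N ≤ N * N := mul_le_mul_of_nonneg_right h (by linarith)
  have h4 : N * N * 1 ≤ N * N * N := mul_le_mul_of_nonneg_left (by linarith) (by positivity)
  calc n * N ≤ N * N * 1 := by linarith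
    _ ≤ N * N * N := h4
    _ = N ^ 3 := by ring

set_option maxHeartbeats 1000000

/-- **Theorem (Statement 5).** (Lemma `subspace1`.)  If on a small ball `B` the system
(14)–(15) at level `i` has no polynomial solutions, then the set of `q ∈ 𝔽[X]^{m+n}`
solving (16)–(17) at level `j = i` for some `A ∈ B` contains at most `m` linearly
independent points. -/
theorem subspace_one (𝔽 : Type) [Field 𝔽] [Fintype 𝔽] (m n : ℕ)
    (hm : 0 < m) (hn : 0 < n) (σ : ℝ) (hσ : 0 < σ) :
    ∃ R₀ : ℝ, 1 ≤ R₀ ∧ ∀ R : ℝ, R₀ ≤ R →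
      ∀ (i : ℕ) (c₀ : Mat 𝔽 m n) (ρ : ℝ),
        ρ < R ^ (-((m : ℝ) + n) * (tau m n + i)) →
        (∀ A ∈ mball c₀ ρ, mnorm A ≤ σ) →
        (¬ ∃ (q : Fin m ⊕ Fin n → L 𝔽) (A : Mat 𝔽 m n), A ∈ mball c₀ ρ ∧
          (∀ t, IsPoly (q t)) ∧
          0 < (⨆ l : Fin m, lnorm (q (Sum.inl l))) ∧
          (⨆ l : Fin m, lnorm (q (Sum.inl l))) < del R m n * R ^ ((n : ℝ) * (tau m n + i)) ∧
          (⨆ l' : Fin n, lnorm (Matrix.vecMul q (Abar A) (Sum.inl l'))) <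
            del R m n * R ^ (-(m : ℝ) * (tau m n + i) - n)) →
        ∀ v : Fin (m + 1) → (Fin n ⊕ Fin m → L 𝔽),
          (∀ r, (∀ t, IsPoly (v r t)) ∧ ∃ A ∈ mball c₀ ρ,
            0 < (⨆ l' : Fin n, lnorm (v r (Sum.inl l'))) ∧
            (⨆ l' : Fin n, lnorm (v r (Sum.inl l'))) <
              delStar R m n * R ^ ((m : ℝ) * (1 + i)) ∧
            (⨆ l : Fin m, lnorm (Matrix.vecMul (v r) (AbarStar A) (Sum.inl l))) <
              delStar R m n * R ^ (-(n : ℝ) * (1 + i) - m)) →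
          ¬ LinearIndependent (L 𝔽) v := by
  refine ⟨2, by norm_num, ?_⟩
  intro R hR i c₀ ρ hρ _ hno v hv hli
  have hR0 : 0 < R := by linarith
  have hR1 : 1 < R := by linarith
  have hk := card_gt_one (𝔽 := 𝔽)
  have hk0 : (0 : ℝ) < Fintype.card 𝔽 := by linarith
  have : Nonempty (Fin m) := ⟨⟨0, hm⟩⟩
  have : Nonempty (Fin n) := ⟨⟨0, hn⟩⟩
  have hmR : (1 : ℝ) ≤ m := by exact_mod_cast hm
  have hnR : (1 : ℝ) ≤ n := by exact_mod_cast hn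
  have hiR : (0 : ℝ) ≤ i := Nat.cast_nonneg i
  have hτ : ((m : ℝ) + n) * tau m n = m := by
    unfold tau
    field_simp
  have hτ0 : 0 ≤ tau m n := by unfold tau; positivity
  have hτ1 : tau m n ≤ 1 := by
    unfold tau
    rw [div_le_one (by positivity)]
    linarith
  -- centre is in the ball
  have hent : ∀ A ∈ mball c₀ ρ, ∀ a b, lnorm ((A - c₀) a b) ≤ ρ := by
    intro A hA a b
    exact (le_iSup_fin (fun p : Fin m × Fin n => lnorm ((A - c₀) p.1 p.2)) (a, b)).trans hA
  have hρ0 : 0 ≤ ρ := by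
    obtain ⟨-, A, hA, -⟩ := hv 0
    exact (lnorm_nonneg _).trans (hent A hA ⟨0, hm⟩ ⟨0, hn⟩)
  have hc : c₀ ∈ mball c₀ ρ := by
    simp only [mball, mnorm, Set.mem_ofPred_eq, sub_self, Matrix.zero_apply, lnorm_zero]
    simpa using hρ0
  set N : ℝ := (m : ℝ) + n with hN
  have hN2 : 2 ≤ N := by linarith
  set X : ℝ := R ^ ((m : ℝ) * (1 + i) - n * N ^ 2) with hX
  set Y : ℝ := R ^ (-(n : ℝ) * i - n * N ^ 2) with hY
  set M : ℝ := R ^ (N ^ 3 + n) with hM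
  have hX0 : 0 < X := Real.rpow_pos_of_pos hR0 _
  have hY0 : 0 < Y := Real.rpow_pos_of_pos hR0 _
  have hM0 : 0 < M := Real.rpow_pos_of_pos hR0 _
  have hXe : delStar R m n * R ^ ((m : ℝ) * (1 + i)) = X := by
    rw [delStar, ← Real.rpow_add hR0, hX]; congr 1; ring
  -- bounds for v
  have hvX : ∀ r l, lnorm (tr c₀ (v r) (Sum.inl l)) ≤ X := by
    intro r l
    obtain ⟨-, A, hA, -, h1, -⟩ := hv r
    rw [hXe] at h1
    exact (le_iSup_fin (fun l' : Fin n => lnorm (v r (Sum.inl l'))) l).trans h1.le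
  have hvY : ∀ r l, lnorm (tr c₀ (v r) (Sum.inr l)) ≤ Y := by
    intro r l
    obtain ⟨-, A, hA, -, -, h2⟩ := hv r
    have h3 := (le_iSup_fin (fun l : Fin m => lnorm (Matrix.vecMul (v r) (AbarStar A)
      (Sum.inl l))) l).trans h2.le
    have e : tr c₀ (v r) (Sum.inr l) = Matrix.vecMul (v r) (AbarStar A) (Sum.inl l) -
        ∑ l', v r (Sum.inl l') * (A - c₀) l l' := by
      simp only [tr, Sum.elim_inr, Matrix.vecMul, dotProduct, AbarStar, Fintype.sum_sum_type,
        Matrix.fromBlocks_apply₁₁, Matrix.fromBlocks_apply₂₁, Matrix.transpose_apply,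
        Matrix.sub_apply, mul_sub, Finset.sum_sub_distrib, Matrix.one_apply]
      simp
      exact add_comm _ _
    rw [e]
    refine lnorm_sub_le (h3.trans ?_) (lnorm_sum_le _ _ hY0.le fun l' _ => ?_)
    · rw [delStar, ← Real.rpow_add hR0, hY]
      refine Real.rpow_le_rpow_of_exponent_le hR1.le ?_
      nlinarith
    · rw [lnorm_mul]
      refine (mul_le_mul (hvX r l') ((hent A hA l l').trans hρ.le) (lnorm_nonneg _) hX0.le).trans ?_
      rw [hX, hY, ← Real.rpow_add hR0]
      refine Real.rpow_le_rpow_of_exponent_le hR1.le ?_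
      have : -N * (tau m n + i) = - (m : ℝ) - N * i := by linarith
      rw [this, hN]
      apply le_of_eq
      ring
  -- choice of s and t
  have hMX : 1 ≤ M * X := by
    rw [hM, hX, ← Real.rpow_add hR0]
    refine Real.one_le_rpow hR1.le ?_
    have h1 : n * N ^ 2 ≤ N ^ 3 := by
      have : (n : ℝ) ≤ N := by linarith
      nlinarith [sq_nonneg N]
    have h2 : 0 ≤ (m : ℝ) * (1 + i) := by positivity
    linarith
  have hMY0 : 0 < M * Y := mul_pos hM0 hY0
  obtain ⟨s, hs1, hs2⟩ : ∃ s : ℕ, (Fintype.card 𝔽 : ℝ) ^ s ≤ M * X ∧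
      M * X < (Fintype.card 𝔽 : ℝ) ^ (s + 1) := exists_nat_pow_near hMX hk
  obtain ⟨t, ht1, ht2⟩ : ∃ t : ℕ, (Fintype.card 𝔽 : ℝ) ^ (-(t : ℤ)) ≤ M * Y ∧
      (t = 0 ∨ M * Y < (Fintype.card 𝔽 : ℝ) ^ (-(t : ℤ) + 1)) := by
    have hex : ∃ t : ℕ, (Fintype.card 𝔽 : ℝ) ^ (-(t : ℤ)) ≤ M * Y := by
      obtain ⟨t, ht⟩ := exists_pow_lt_of_lt_one hMY0 (inv_lt_one_of_one_lt₀ hk)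
      refine ⟨t, ?_⟩
      rw [zpow_neg, zpow_natCast, ← inv_pow]
      exact ht.le
    refine ⟨Nat.find hex, Nat.find_spec hex, ?_⟩
    rcases Nat.eq_zero_or_pos (Nat.find hex) with h | h
    · exact Or.inl h
    · right
      have := Nat.find_min hex (Nat.sub_lt h one_pos)
      rw [not_le] at this
      have e : -((Nat.find hex : ℕ) : ℤ) + 1 = -((Nat.find hex - 1 : ℕ) : ℤ) := by
        rw [Nat.cast_sub h]; push_cast; ring
      rw [e]
      exact this
  rcases dual_alt c₀ s t with ⟨a, b, ha, hb, ha0, hat, hab⟩ | hsurj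
  · -- a solution of the primal system
    apply hno
    obtain ⟨l0, hl0⟩ := Function.ne_iff.1 ha0
    have ht : M * Y < (Fintype.card 𝔽 : ℝ) ^ (-(t : ℤ) + 1) := by
      rcases ht2 with h | h
      · exfalso
        apply hl0
        subst h
        ext j
        rcases lt_or_ge j 1 with hj | hj
        · simpa using hat l0 j (by simpa using hj)
        · simpa using ha l0 j (by omega)
      · exact h
    refine ⟨Sum.elim a b, c₀, hc, ?_, ?_, ?_, ?_⟩
    · rintro (l | l)
      · exact ha l
      · exact hb l
    · exact (lnorm_pos hl0).trans_le (le_iSup_fin (fun l => lnorm (Sum.elim a b (Sum.inl l))) l0)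
    · refine iSup_lt_fin _ fun l => ?_
      have h1 : lnorm (a l) ≤ (Fintype.card 𝔽 : ℝ) ^ (-(-(t : ℤ) + 1)) :=
        (lnorm_le_iff _ _).2 (hat l)
      rw [zpow_neg] at h1
      have h2 := inv_strictAnti₀ hMY0 ht
      refine (h1.trans_lt h2).trans_le ?_
      rw [hM, hY, ← Real.rpow_add hR0, ← Real.rpow_neg hR0.le, del, ← Real.rpow_add hR0]
      refine Real.rpow_le_rpow_of_exponent_le hR1.le ?_
      have h4 : (m : ℝ) * N ^ 2 + n * N ^ 2 = N ^ 3 := by rw [hN]; ring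
      have h5 : 0 ≤ (n : ℝ) * tau m n := by positivity
      nlinarith
    · refine iSup_lt_fin _ fun l => ?_
      have e : Matrix.vecMul (Sum.elim a b) (Abar c₀) (Sum.inl l) =
          ∑ l', a l' * c₀ l' l + b l := by
        simp only [Matrix.vecMul, dotProduct, Abar, Fintype.sum_sum_type,
          Matrix.fromBlocks_apply₁₁, Matrix.fromBlocks_apply₂₁, Sum.elim_inl, Sum.elim_inr,
          Matrix.one_apply]
        simp
      rw [e]
      have h1 := (lnorm_le_iff (∑ l', a l' * c₀ l' l + b l) ((s : ℤ) + 1)).2 (hab l)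
      have h2 := inv_strictAnti₀ (by linarith) hs2
      have h3 : (Fintype.card 𝔽 : ℝ) ^ (-((s : ℤ) + 1)) = ((Fintype.card 𝔽 : ℝ) ^ (s + 1))⁻¹ := by
        rw [zpow_neg]; norm_cast
      rw [h3] at h1
      refine (h1.trans_lt h2).trans_le ?_
      rw [hM, hX, ← Real.rpow_add hR0, ← Real.rpow_neg hR0.le, del, ← Real.rpow_add hR0]
      refine Real.rpow_le_rpow_of_exponent_le hR1.le ?_
      have h4 : (m : ℝ) * N ^ 2 + n * N ^ 2 = N ^ 3 := by rw [hN]; ring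
      have h5 : (m : ℝ) * tau m n ≤ m := by nlinarith
      nlinarith
  · obtain ⟨u, hup, hu, huX, huY⟩ := exists_indep c₀ s t hsurj
    have hfin := det_bound c₀ X Y M hX0.le hY0.le hM0.le v hli (fun r => (hv r).1) hvX hvY u hu hup
      (fun r l => (huX r l).trans hs1) (fun r l => (huY r l).trans ht1)
    refine absurd hfin (not_le.2 ?_)
    rw [hM, hX, hY, ← Real.rpow_mul_natCast hR0.le, ← Real.rpow_mul_natCast hR0.le,
      ← Real.rpow_mul_natCast hR0.le, ← Real.rpow_add hR0, ← Real.rpow_add hR0]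
    refine Real.rpow_lt_one_of_one_lt_of_neg hR1 ?_
    rw [Nat.cast_sub hn, Nat.cast_one]
    have h1 : (N ^ 3 + n) * ((n : ℝ) - 1) + (((m : ℝ) * (1 + i) - n * N ^ 2) * n +
        (-(n : ℝ) * i - n * N ^ 2) * m) = n * N - n - N ^ 3 := by rw [hN]; ring
    rw [h1]
    have h2 : n * N ≤ N ^ 3 := aux_cube n N (by linarith) hN2
    linarith

end FSBad
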